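/- arXiv:1603.02527 — 2 statements merged into one kernel-verified Lean document; each statement's English description precedes it below -/
import Mathlib

section
/- Fix T>0. Let {ψ_n}_{n∈ℕ}⊂L²(0,T;H) converge weakly to 0 in L²(0,T;H). Then for every ρ<1, lim_{n→∞} sup_{t∈[0,T]} ‖Γ(ψ_n)(t)‖_{H^ρ} = 0. -/
open MeasureTheory Filter Topology Set

noncomputable section

/-- The nonzero lattice points `ℤ²₀ = ℤ² \ {0}`. -/
abbrev Z2 : Type := {k : ℤ × ℤ // k ≠ 0}

/-- `|k| = √(k₁² + k₂²)`. -/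
def knorm (k : Z2) : ℝ := Real.sqrt ((k.val.1 : ℝ) ^ 2 + (k.val.2 : ℝ) ^ 2)

/-- Membership in `H^s`: summability of `|k|^{2s} |a_k|²`. -/
def MemHs (s : ℝ) (a : Z2 → ℂ) : Prop :=
  Summable fun k : Z2 => knorm k ^ (2 * s) * ‖a k‖ ^ 2

/-- The `H^s` norm `(Σ_k |k|^{2s}|a_k|²)^{1/2}`. -/
def hsNorm (s : ℝ) (a : Z2 → ℂ) : ℝ :=
  Real.sqrt (∑' k : Z2, knorm k ^ (2 * s) * ‖a k‖ ^ 2)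

/-- Membership in `L²(0,T;H)`. -/
def MemL2H (T : ℝ) (φ : ℝ → Z2 → ℂ) : Prop :=
  (∀ k : Z2, Measurable fun t => φ t k) ∧
  (∀ t ∈ Icc (0 : ℝ) T, Summable fun k : Z2 => ‖φ t k‖ ^ 2) ∧
  IntegrableOn (fun t => ∑' k : Z2, ‖φ t k‖ ^ 2) (Ioc 0 T)

/-- The `L²(0,T;H)` norm. -/
def L2Hnorm (T : ℝ) (φ : ℝ → Z2 → ℂ) : ℝ :=
  Real.sqrt (∫ t in Ioc (0 : ℝ) T, ∑' k : Z2, ‖φ t k‖ ^ 2)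

/-- `(Γ(φ)(t))_k = ∫₀ᵗ e^{-(t-s)|k|²} φ_k(s) ds`. -/
def Gam (φ : ℝ → Z2 → ℂ) (t : ℝ) (k : Z2) : ℂ :=
  ∫ s in Ioc (0 : ℝ) t, Real.exp (-(t - s) * knorm k ^ 2) • φ s k

/-- The `L²(0,T;H)` inner product `∫₀ᵀ ⟨ψ(t), φ(t)⟩_H dt`. -/
def innerL2 (T : ℝ) (ψ φ : ℝ → Z2 → ℂ) : ℂ :=
  ∫ t in Ioc (0 : ℝ) T, ∑' k : Z2, (starRingEnd ℂ) (ψ t k) * φ t k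

/-- The eigenvalues `λ_k(δ) = (1 + δ|k|^{2γ})^{-1/2}` of `Q_δ`. -/
def lam (γ δ : ℝ) (k : Z2) : ℝ := (1 + δ * knorm k ^ (2 * γ)) ^ (-(1 / 2) : ℝ)

/-- The diagonal operator `Q_δ`. -/
def Qop (γ δ : ℝ) (a : Z2 → ℂ) (k : Z2) : ℂ := lam γ δ k • a k

end

/-!
By Cauchy–Schwarz in time, `‖Γ(φ)(t)_k‖² ≤ |k|⁻² ∫ ‖φ_k‖²`, so the `k`-th term of
`‖Γ(ψ n)(t)‖²_{H^ρ}` is at most `|k|^{2ρ-2} ∫ ‖(ψ n)_k‖²`. Since `ρ < 1` and a weakly convergent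
sequence is bounded (Banach–Steinhaus), the high modes are negligible uniformly in `n` and `t`. For
each of the finitely many remaining modes, testing the weak convergence against
`e^{s|k|²} 1_{(0,t]}(s)` in the `k`-th coordinate gives pointwise convergence of
`e^{t|k|²} Γ(ψ n)(t)_k` to `0`; by boundedness in `L²` these functions of `t` are uniformly
`1/2`-Hölder, and equicontinuity makes the convergence uniform on `[0, T]`.
-/

section UniformLimits

variable {ι X α : Type*} {l : Filter ι}

theorem tendstoUniformlyOn_of_equicontinuousOn [TopologicalSpace X] [UniformSpace α]
    {K : Set X} (hK : IsCompact K) {F : ι → X → α} {f : X → α} (hF : EquicontinuousOn F K)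
    (hlim : ∀ x ∈ K, Tendsto (F · x) l (𝓝 (f x))) : TendstoUniformlyOn F f l K := by
  have : CompactSpace K := isCompact_iff_compactSpace.1 hK
  have hpi : Tendsto (fun n (x : K) => F n x) l (𝓝 fun x : K => f x) :=
    tendsto_pi_nhds.2 fun x => hlim x x.2
  rw [tendstoUniformlyOn_iff_tendstoUniformly_comp_coe]
  exact UniformFun.tendsto_iff_tendstoUniformly.1
    ((((equicontinuous_restrict_iff F).2 hF).tendsto_uniformFun_iff_pi l _).2 hpi)

theorem tsum_le_sum_add_mul_tsum {κ : Type*} {f a : κ → ℝ} {δ : ℝ} (S : Finset κ) (hδ : 0 ≤ δ)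
    (ha : Summable a) (ha₀ : ∀ k, 0 ≤ a k) (hf₀ : ∀ k, 0 ≤ f k) (hfa : ∀ k ∉ S, f k ≤ δ * a k) :
    ∑' k, f k ≤ ∑ k ∈ S, f k + δ * ∑' k, a k := by
  have hδa : Summable fun k : {k // k ∉ S} => δ * a k := (ha.subtype _).mul_left δ
  have hf_compl : Summable fun k : {k // k ∉ S} => f k :=
    Summable.of_nonneg_of_le (fun k => hf₀ k) (fun k => hfa k k.2) hδa
  rw [← (S.summable_compl_iff.1 hf_compl).sum_add_tsum_subtype_compl S, ← tsum_mul_left]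
  gcongr
  exact (hf_compl.tsum_le_tsum (fun k : {k // k ∉ S} => hfa k k.2) hδa).trans <|
    (ha.mul_left δ).tsum_subtype_le _ {k | k ∉ S} fun k => mul_nonneg hδ (ha₀ k)

theorem tendstoUniformlyOn_tsum_of_le_mul {κ : Type*} {s : Set X} {f : ι → X → κ → ℝ} {w : κ → ℝ}
    {a : ι → κ → ℝ} {M : ℝ} (hw : Tendsto w cofinite (𝓝 0)) (ha : ∀ n, Summable (a n))
    (ha₀ : ∀ n k, 0 ≤ a n k) (haM : ∀ n, ∑' k, a n k ≤ M)
    (hf₀ : ∀ n, ∀ x ∈ s, ∀ k, 0 ≤ f n x k) (hfa : ∀ n, ∀ x ∈ s, ∀ k, f n x k ≤ w k * a n k)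
    (hf : ∀ k, TendstoUniformlyOn (fun n x => f n x k) (fun _ => 0) l s) :
    TendstoUniformlyOn (fun n x => ∑' k, f n x k) (fun _ => 0) l s := by
  rw [Metric.tendstoUniformlyOn_iff]
  intro ε hε
  set δ := ε / (2 * (|M| + 1)) with hδ
  have hδ₀ : 0 < δ := by positivity
  have hδM : δ * M < ε / 2 := calc
    δ * M < δ * (|M| + 1) := by gcongr; linarith [le_abs_self M]
    _ = ε / 2 := by rw [hδ]; field_simp
  obtain ⟨S, hS⟩ : ∃ S : Finset κ, ∀ k ∉ S, w k ≤ δ := by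
    have hfin : {k | ¬w k ≤ δ}.Finite := hw.eventually (ge_mem_nhds hδ₀)
    exact ⟨hfin.toFinset, by simp⟩
  have hlow : Tendsto (fun p : ι × X => ∑ k ∈ S, f p.1 p.2 k) (l ×ˢ 𝓟 s) (𝓝 0) := by
    rw [← Finset.sum_const_zero (s := S)]
    exact tendsto_finsetSum S fun k _ => tendsto_prod_principal_iff.2 (hf k)
  filter_upwards [eventually_prod_principal_iff.1 <|
    hlow.eventually (gt_mem_nhds (half_pos hε))] with n hn x hx
  have hsum : ∑ k ∈ S, f n x k < ε / 2 := hn x hx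
  have hsplit := tsum_le_sum_add_mul_tsum S hδ₀.le (ha n) (ha₀ n) (hf₀ n x hx) fun k hk =>
    (hfa n x hx k).trans (mul_le_mul_of_nonneg_right (hS k hk) (ha₀ n k))
  have htail : δ * ∑' k, a n k ≤ δ * M := mul_le_mul_of_nonneg_left (haM n) hδ₀.le
  rw [dist_zero_left, Real.norm_of_nonneg (tsum_nonneg (hf₀ n x hx))]
  linarith

end UniformLimits

theorem memLp_two_restrict_Ioc_of_continuous {E : Type*} [NormedAddCommGroup E] {g : ℝ → E}
    (hg : Continuous g) (a b : ℝ) :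
    MemLp g 2 (volume.restrict (Ioc a b)) :=
  (memLp_two_iff_integrable_sq_norm hg.aestronglyMeasurable).2 (hg.norm.pow 2).integrableOn_Ioc

theorem integral_norm_sq_le_of_ae_norm_le_mul {α E F : Type*} [MeasurableSpace α] {μ : Measure α}
    [NormedAddCommGroup E] [NormedAddCommGroup F] {f : α → E} {g : α → F} {c : ℝ}
    (hf : MemLp f 2 μ) (hgf : ∀ᵐ x ∂μ, ‖g x‖ ≤ c * ‖f x‖) :
    ∫ x, ‖g x‖ ^ 2 ∂μ ≤ c ^ 2 * ∫ x, ‖f x‖ ^ 2 ∂μ := by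
  rw [← integral_const_mul]
  refine integral_mono_of_nonneg (ae_of_all _ fun _ => by positivity)
    ((hf.integrable_norm_pow two_ne_zero).const_mul _) ?_
  filter_upwards [hgf] with x hx
  rw [← mul_pow]
  exact pow_le_pow_left₀ (norm_nonneg _) hx 2

section CauchySchwarz

variable {α E : Type*} [MeasurableSpace α] {μ : Measure α} [NormedAddCommGroup E] [NormedSpace ℝ E]

theorem norm_sq_integral_smul_le {g : α → ℝ} {f : α → E} (hg : MemLp g 2 μ)
    (hf : MemLp f 2 μ) :
    ‖∫ x, g x • f x ∂μ‖ ^ 2 ≤ (∫ x, g x ^ 2 ∂μ) * ∫ x, ‖f x‖ ^ 2 ∂μ := by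
  have hHolder := integral_mul_norm_le_Lp_mul_Lq Real.HolderConjugate.two_two
    (f := g) (g := fun x => ‖f x‖) (μ := μ) (by simpa using hg) (by simpa using hf.norm)
  simp only [Real.norm_eq_abs, Real.rpow_two, sq_abs, abs_norm, ← Real.sqrt_eq_rpow] at hHolder
  calc ‖∫ x, g x • f x ∂μ‖ ^ 2 ≤ (∫ x, |g x| * ‖f x‖ ∂μ) ^ 2 := by
        gcongr
        simpa only [norm_smul, Real.norm_eq_abs] using
          norm_integral_le_integral_norm fun x => g x • f x
    _ ≤ (√(∫ x, g x ^ 2 ∂μ) * √(∫ x, ‖f x‖ ^ 2 ∂μ)) ^ 2 := by gcongr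
    _ = (∫ x, g x ^ 2 ∂μ) * ∫ x, ‖f x‖ ^ 2 ∂μ := by
        rw [mul_pow, Real.sq_sqrt (integral_nonneg fun _ => by positivity),
          Real.sq_sqrt (integral_nonneg fun _ => by positivity)]

theorem norm_sq_sub_setIntegral_Ioc_le {f : ℝ → E} {a b u t : ℝ}
    (hf : MemLp f 2 (volume.restrict (Ioc a b))) (hu : u ∈ Icc a b) (ht : t ∈ Icc a b) :
    ‖(∫ s in Ioc a t, f s) - ∫ s in Ioc a u, f s‖ ^ 2 ≤ |t - u| * ∫ s in Ioc a b, ‖f s‖ ^ 2 := by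
  have hsub : uIoc u t ⊆ Ioc a b := Ioc_subset_Ioc (le_min hu.1 ht.1) (max_le hu.2 ht.2)
  have : IsFiniteMeasure (volume.restrict (uIoc u t)) := ⟨by simp⟩
  have hint : ∀ v ∈ Icc a b, IntervalIntegrable f volume a v := fun v hv =>
    (intervalIntegrable_iff_integrableOn_Ioc_of_le hv.1).2 <|
      IntegrableOn.mono_set (hf.integrable one_le_two) (Ioc_subset_Ioc_right hv.2)
  have hsq : IntegrableOn (fun s => ‖f s‖ ^ 2) (Ioc a b) := hf.integrable_norm_pow two_ne_zero
  calc ‖(∫ s in Ioc a t, f s) - ∫ s in Ioc a u, f s‖ ^ 2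
      = ‖∫ s in uIoc u t, (1 : ℝ) • f s‖ ^ 2 := by
        simp only [one_smul]
        rw [← intervalIntegral.integral_of_le ht.1, ← intervalIntegral.integral_of_le hu.1,
          intervalIntegral.integral_interval_sub_left (hint t ht) (hint u hu),
          intervalIntegral.norm_integral_eq_norm_integral_uIoc]
    _ ≤ (∫ _ in uIoc u t, (1 : ℝ) ^ 2) * ∫ s in uIoc u t, ‖f s‖ ^ 2 :=
        norm_sq_integral_smul_le (memLp_const 1) <|
          hf.mono_measure (Measure.restrict_mono_set _ hsub)
    _ ≤ |t - u| * ∫ s in Ioc a b, ‖f s‖ ^ 2 := by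
        rw [one_pow, setIntegral_const, smul_eq_mul, mul_one, measureReal_def, Real.volume_uIoc,
          ENNReal.toReal_ofReal (abs_nonneg _)]
        gcongr ?_ * ?_
        exact setIntegral_mono_set hsq (ae_of_all _ fun _ => by positivity) hsub.eventuallyLE

theorem tendstoUniformlyOn_setIntegral_Ioc {ι : Type*} {l : Filter ι} {F : ι → ℝ → E} {f : ℝ → E}
    {a b M : ℝ} (hF : ∀ n, MemLp (F n) 2 (volume.restrict (Ioc a b)))
    (hM : ∀ n, ∫ s in Ioc a b, ‖F n s‖ ^ 2 ≤ M)
    (hlim : ∀ t ∈ Icc a b, Tendsto (fun n => ∫ s in Ioc a t, F n s) l (𝓝 (f t))) :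
    TendstoUniformlyOn (fun n t => ∫ s in Ioc a t, F n s) f l (Icc a b) := by
  refine tendstoUniformlyOn_of_equicontinuousOn isCompact_Icc ?_ hlim
  rw [← equicontinuous_restrict_iff]
  refine (Metric.uniformEquicontinuous_of_continuity_modulus (fun r => √(r * M)) ?_ _
    fun t u n => ?_).equicontinuous
  · exact Continuous.tendsto' (by fun_prop) 0 0 (by simp)
  · rw [dist_eq_norm]
    refine Real.le_sqrt_of_sq_le ?_
    exact (norm_sq_sub_setIntegral_Ioc_le (hF n) u.2 t.2).trans
      (mul_le_mul_of_nonneg_left (hM n) (abs_nonneg _))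

end CauchySchwarz

section ProductWithCount

variable {α κ E : Type*} [MeasurableSpace α] {μ : Measure α} [MeasurableSpace κ]
  [MeasurableSingletonClass κ] [Countable κ] [NormedAddCommGroup E]

theorem integral_count_eq_tsum [NormedSpace ℝ E] [CompleteSpace E] {f : κ → E}
    (hf : Summable fun k => ‖f k‖) : ∫ k, f k ∂Measure.count = ∑' k, f k := by
  simpa using integral_countable (integrable_count_iff.2 hf)

theorem memLp_two_prod_count_iff {f : α × κ → E}
    (hf : AEStronglyMeasurable f (μ.prod Measure.count)) :
    MemLp f 2 (μ.prod Measure.count) ↔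
      (∀ᵐ x ∂μ, Summable fun k => ‖f (x, k)‖ ^ 2) ∧
        Integrable (fun x => ∑' k, ‖f (x, k)‖ ^ 2) μ := by
  have hsq : AEStronglyMeasurable (fun p => ‖f p‖ ^ 2) (μ.prod Measure.count) := hf.norm.pow 2
  rw [memLp_two_iff_integrable_sq_norm hf, integrable_prod_iff hsq]
  simp only [integrable_count_iff, norm_pow, norm_norm]
  refine and_congr_right fun hsum => integrable_congr ?_
  filter_upwards [hsum] with x hx
  exact integral_count_eq_tsum (by simpa using hx)

end ProductWithCount

theorem exists_norm_le_of_bddAbove_norm_inner {ι 𝕜 E : Type*} [RCLike 𝕜] [NormedAddCommGroup E]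
    [InnerProductSpace 𝕜 E] [CompleteSpace E] {x : ι → E}
    (hx : ∀ y, BddAbove (range fun i => ‖inner 𝕜 y (x i)‖)) : ∃ C, ∀ i, ‖x i‖ ≤ C := by
  obtain ⟨C, hC⟩ := banach_steinhaus (g := fun i => innerSL 𝕜 (x i)) fun y =>
    (hx y).imp fun _ hB i => by
      rw [innerSL_apply_apply, norm_inner_symm]
      exact hB (mem_range_self i)
  exact ⟨C, fun i => by simpa only [innerSL_apply_norm] using hC i⟩

section SquareIntegrable

variable {T : ℝ} {φ χ : ℝ → Z2 → ℂ}

/-- The product of Lebesgue measure on `(0, T]` and counting measure on `ℤ²₀`; the space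
`L²(0,T;H)` is realised as the scalar `L²` space of this measure. -/
noncomputable abbrev timeModeMeasure (T : ℝ) : Measure (ℝ × Z2) :=
  (volume.restrict (Ioc 0 T)).prod Measure.count

namespace MemL2H

theorem ae_summable (h : MemL2H T φ) :
    ∀ᵐ t ∂volume.restrict (Ioc 0 T), Summable fun k => ‖φ t k‖ ^ 2 :=
  (ae_restrict_mem measurableSet_Ioc).mono fun t ht => h.2.1 t (Ioc_subset_Icc_self ht)

theorem memLp_uncurry (h : MemL2H T φ) : MemLp (Function.uncurry φ) 2 (timeModeMeasure T) :=
  (memLp_two_prod_count_iff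
    (measurable_from_prod_countable_left h.1).aestronglyMeasurable).2 ⟨h.ae_summable, h.2.2⟩

theorem memLp_mode (h : MemL2H T φ) (k : Z2) :
    MemLp (fun t => φ t k) 2 (volume.restrict (Ioc 0 T)) := by
  rw [memLp_two_iff_integrable_sq_norm (h.1 k).aestronglyMeasurable]
  refine h.2.2.mono' ((h.1 k).norm.pow_const 2).aestronglyMeasurable ?_
  filter_upwards [h.ae_summable] with t ht
  simpa using ht.le_tsum k fun _ _ => by positivity

theorem hasSum_integral_mode (h : MemL2H T φ) :
    HasSum (fun k => ∫ t in Ioc 0 T, ‖φ t k‖ ^ 2) (L2Hnorm T φ ^ 2) := by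
  rw [L2Hnorm, Real.sq_sqrt (integral_nonneg fun _ => tsum_nonneg fun _ => by positivity)]
  exact hasSum_integral_of_dominated_convergence (fun k t => ‖φ t k‖ ^ 2)
    (fun k => ((h.1 k).norm.pow_const 2).aestronglyMeasurable)
    (fun k => ae_of_all _ fun t => by simp) h.ae_summable h.2.2
    (h.ae_summable.mono fun t ht => ht.hasSum)

/-- The class of `φ` in the Hilbert space `L²((0,T] × ℤ²₀)`. -/
noncomputable def toL2 (h : MemL2H T φ) : Lp ℂ 2 (timeModeMeasure T) :=
  h.memLp_uncurry.toLp

theorem inner_toL2 (hχ : MemL2H T χ) (hφ : MemL2H T φ) :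
    inner ℂ hχ.toL2 hφ.toL2 = innerL2 T χ φ := by
  have hpair : (fun p => inner ℂ (hχ.toL2 p) (hφ.toL2 p)) =ᵐ[timeModeMeasure T]
      fun p => (starRingEnd ℂ) (χ p.1 p.2) * φ p.1 p.2 := by
    filter_upwards [hχ.memLp_uncurry.coeFn_toLp, hφ.memLp_uncurry.coeFn_toLp] with p hp₁ hp₂
    rw [toL2, toL2, hp₁, hp₂, RCLike.inner_apply', Function.uncurry, Function.uncurry]
  have hint := (L2.integrable_inner (𝕜 := ℂ) hχ.toL2 hφ.toL2).congr hpair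
  rw [L2.inner_def, integral_congr_ae hpair, integral_prod _ hint, innerL2]
  refine integral_congr_ae ?_
  filter_upwards [hint.prod_right_ae] with t ht
  exact integral_count_eq_tsum (integrable_count_iff.1 ht)

theorem norm_toL2 (h : MemL2H T φ) : ‖h.toL2‖ = L2Hnorm T φ := by
  have hself : innerL2 T φ φ = ∫ t in Ioc 0 T, ((∑' k, ‖φ t k‖ ^ 2 : ℝ) : ℂ) := by
    simp only [innerL2, Complex.conj_mul', Complex.ofReal_tsum, Complex.ofReal_pow]
  rw [norm_eq_sqrt_re_inner (𝕜 := ℂ), inner_toL2, hself, integral_complex_ofReal, L2Hnorm]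
  simp

theorem exists_toL2_eq (f : Lp ℂ 2 (timeModeMeasure T)) :
    ∃ (χ : ℝ → Z2 → ℂ) (h : MemL2H T χ), h.toL2 = f := by
  have hf : StronglyMeasurable f := Lp.stronglyMeasurable f
  obtain ⟨hsum, hint⟩ := (memLp_two_prod_count_iff hf.aestronglyMeasurable).1 (Lp.memLp f)
  -- `MemL2H` demands summability at every time, so `f` is set to zero on a null set of times.
  obtain ⟨S, hS, hS_meas, hS_sum⟩ := hsum.exists_measurable_mem
  have hχ : MemL2H T fun t k => S.indicator (fun t => f (t, k)) t := by
    refine ⟨fun k => (hf.measurable.comp (by fun_prop)).indicator hS_meas, fun t _ => ?_, ?_⟩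
    · by_cases ht : t ∈ S
      · simpa [ht] using hS_sum t ht
      · simp [ht]
    · refine hint.congr ?_
      filter_upwards [hS] with t ht
      simp [ht]
  refine ⟨_, hχ, Lp.ext (hχ.memLp_uncurry.coeFn_toLp.trans ?_)⟩
  filter_upwards [Measure.quasiMeasurePreserving_fst.ae hS] with p hp
  have hp : p.1 ∈ S := hp
  simp [Function.uncurry, hp]

end MemL2H

end SquareIntegrable

section WeaklyNull

variable {T : ℝ} {ψ : ℕ → ℝ → Z2 → ℂ}

/-- Weak convergence of the sequence `ψ` to `0` in `L²(0,T;H)`. -/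
def WeaklyNull (T : ℝ) (ψ : ℕ → ℝ → Z2 → ℂ) : Prop :=
  ∀ χ : ℝ → Z2 → ℂ, MemL2H T χ → Tendsto (fun n => innerL2 T χ (ψ n)) atTop (𝓝 0)

theorem WeaklyNull.exists_L2Hnorm_le (hweak : WeaklyNull T ψ) (hψ : ∀ n, MemL2H T (ψ n)) :
    ∃ M, ∀ n, L2Hnorm T (ψ n) ≤ M := by
  simp only [← fun n => (hψ n).norm_toL2]
  refine exists_norm_le_of_bddAbove_norm_inner (𝕜 := ℂ) fun f => ?_
  obtain ⟨χ, hχ, rfl⟩ := MemL2H.exists_toL2_eq f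
  simpa only [hχ.inner_toL2 (hψ _)] using (hweak χ hχ).norm.bddAbove_range

theorem memL2H_single {k : Z2} {g : ℝ → ℂ} (hg : Measurable g)
    (hg₂ : MemLp g 2 (volume.restrict (Ioc 0 T))) : MemL2H T fun t => Pi.single k (g t) := by
  have hoff : ∀ t, ∀ j ≠ k, ‖(Pi.single k (g t) : Z2 → ℂ) j‖ ^ 2 = 0 := fun t j hj => by
    simp [hj]
  have hsum : (fun t => ∑' j, ‖(Pi.single k (g t) : Z2 → ℂ) j‖ ^ 2) = fun t => ‖g t‖ ^ 2 :=
    funext fun t => (tsum_eq_single k (hoff t)).trans (by rw [Pi.single_eq_same])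
  refine ⟨fun j => ?_, fun t _ => ?_, ?_⟩
  · exact (measurable_pi_iff.1 (measurable_update 0) j).comp hg
  · exact summable_of_ne_finset_zero (s := {k}) fun j hj => hoff t j (by simpa using hj)
  · rw [hsum]
    exact hg₂.integrable_norm_pow two_ne_zero

theorem innerL2_single (k : Z2) (g : ℝ → ℂ) (φ : ℝ → Z2 → ℂ) :
    innerL2 T (fun t => Pi.single k (g t)) φ =
      ∫ t in Ioc 0 T, (starRingEnd ℂ) (g t) * φ t k := by
  refine integral_congr_ae (ae_of_all _ fun t => ?_)
  refine (tsum_eq_single k fun j hj => ?_).trans ?_ <;> simp [*]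

theorem WeaklyNull.tendsto_setIntegral_Ioc (hweak : WeaklyNull T ψ) (k : Z2) {t : ℝ} (ht : t ≤ T)
    {g : ℝ → ℝ} (hg : Measurable g) (hg₂ : MemLp g 2 (volume.restrict (Ioc 0 t))) :
    Tendsto (fun n => ∫ s in Ioc 0 t, g s • ψ n s k) atTop (𝓝 0) := by
  set G : ℝ → ℂ := (Ioc 0 t).indicator fun s => (g s : ℂ) with hG
  have hsub : Ioc 0 t ⊆ Ioc 0 T := Ioc_subset_Ioc_right ht
  have hG_meas : Measurable G := hg.complex_ofReal.indicator measurableSet_Ioc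
  have hG₂ : MemLp G 2 (volume.restrict (Ioc 0 T)) := by
    rw [memLp_indicator_iff_restrict measurableSet_Ioc, Measure.restrict_restrict_of_subset hsub]
    exact hg₂.ofReal
  refine (hweak _ (memL2H_single (k := k) hG_meas hG₂)).congr fun n => ?_
  have hmul : ∀ s, (starRingEnd ℂ) (G s) * ψ n s k =
      (Ioc 0 t).indicator (fun s => g s • ψ n s k) s := fun s => by
    by_cases hs : s ∈ Ioc 0 t <;> simp [hG, hs]
  simp only [innerL2_single, hmul]
  rw [setIntegral_indicator measurableSet_Ioc, inter_eq_self_of_subset_right hsub]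

end WeaklyNull

section Modes

theorem knorm_pos (k : Z2) : 0 < knorm k := by
  have hk : k.val.1 ≠ 0 ∨ k.val.2 ≠ 0 := not_and_or.1 fun h => k.2 (Prod.ext h.1 h.2)
  rw [knorm, Real.sqrt_pos]
  rcases hk with h | h <;> positivity

theorem tendsto_knorm_cofinite_atTop : Tendsto knorm cofinite atTop := by
  have hnorm : Tendsto (fun k : Z2 => ‖k.val‖) cofinite atTop := by
    refine Tendsto.comp ?_ Subtype.val_injective.tendsto_cofinite
    simpa only [cocompact_eq_cofinite] using tendsto_norm_cocompact_atTop (E := ℤ × ℤ)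
  refine tendsto_atTop_mono (fun k => ?_) hnorm
  rw [Prod.norm_def, Int.norm_eq_abs, Int.norm_eq_abs]
  exact max_le (Real.abs_le_sqrt (le_add_of_nonneg_right (sq_nonneg _)))
    (Real.abs_le_sqrt (le_add_of_nonneg_left (sq_nonneg _)))

theorem tendsto_knorm_rpow_cofinite {r : ℝ} (hr : r < 0) :
    Tendsto (fun k => knorm k ^ r) cofinite (𝓝 0) := by
  simpa only [neg_neg, Function.comp_def] using
    (tendsto_rpow_neg_atTop (neg_pos.2 hr)).comp tendsto_knorm_cofinite_atTop

end Modes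

section Duhamel

variable {T : ℝ} {φ : ℝ → Z2 → ℂ} {ψ : ℕ → ℝ → Z2 → ℂ}

theorem setIntegral_sq_exp_neg_mul_le {κ t : ℝ} (hκ : 0 < κ) (ht : 0 ≤ t) :
    ∫ s in Ioc 0 t, Real.exp (-(t - s) * κ) ^ 2 ≤ 1 / (2 * κ) := by
  have hκ₂ : 2 * κ ≠ 0 := by positivity
  have hexp : ∀ s, Real.exp (-(t - s) * κ) ^ 2 = Real.exp (2 * κ * s - 2 * κ * t) := fun s => by
    rw [← Real.exp_nat_mul]
    congr 1
    push_cast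
    ring
  calc ∫ s in Ioc 0 t, Real.exp (-(t - s) * κ) ^ 2
      = (2 * κ)⁻¹ * (1 - Real.exp (-(2 * κ * t))) := by
        rw [← intervalIntegral.integral_of_le ht]
        simp only [hexp]
        rw [intervalIntegral.integral_comp_mul_sub _ hκ₂, integral_exp, sub_self, mul_zero,
          zero_sub, Real.exp_zero, smul_eq_mul]
    _ ≤ 1 / (2 * κ) := by
        rw [one_div]
        exact mul_le_of_le_one_right (by positivity) (sub_le_self _ (Real.exp_pos _).le)

theorem MemL2H.norm_sq_Gam_le (h : MemL2H T φ) (k : Z2) {t : ℝ} (ht : t ∈ Icc 0 T) :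
    ‖Gam φ t k‖ ^ 2 ≤ 1 / (2 * knorm k ^ 2) * ∫ s in Ioc 0 T, ‖φ s k‖ ^ 2 := by
  have hsub : Ioc 0 t ⊆ Ioc 0 T := Ioc_subset_Ioc_right ht.2
  have hexp : MemLp (fun s => Real.exp (-(t - s) * knorm k ^ 2)) 2 (volume.restrict (Ioc 0 t)) :=
    memLp_two_restrict_Ioc_of_continuous (by fun_prop) 0 t
  have hint : IntegrableOn (fun s => ‖φ s k‖ ^ 2) (Ioc 0 T) :=
    (h.memLp_mode k).integrable_norm_pow two_ne_zero
  refine (norm_sq_integral_smul_le hexp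
    ((h.memLp_mode k).mono_measure (Measure.restrict_mono_set _ hsub))).trans ?_
  gcongr
  · exact setIntegral_sq_exp_neg_mul_le (pow_pos (knorm_pos k) 2) ht.1
  · exact ae_of_all _ fun _ => by positivity

theorem MemL2H.rpow_mul_norm_sq_Gam_le (h : MemL2H T φ) (ρ : ℝ) (k : Z2) {t : ℝ}
    (ht : t ∈ Icc 0 T) :
    knorm k ^ (2 * ρ) * ‖Gam φ t k‖ ^ 2 ≤
      knorm k ^ (2 * ρ - 2) * ∫ s in Ioc 0 T, ‖φ s k‖ ^ 2 := by
  have hk : 0 < knorm k := knorm_pos k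
  calc knorm k ^ (2 * ρ) * ‖Gam φ t k‖ ^ 2
      ≤ knorm k ^ (2 * ρ) * (1 / (2 * knorm k ^ 2) * ∫ s in Ioc 0 T, ‖φ s k‖ ^ 2) := by
        gcongr
        exact h.norm_sq_Gam_le k ht
    _ ≤ knorm k ^ (2 * ρ) * (1 / knorm k ^ 2 * ∫ s in Ioc 0 T, ‖φ s k‖ ^ 2) := by
        gcongr
        exact le_mul_of_one_le_left (sq_nonneg _) one_le_two
    _ = knorm k ^ (2 * ρ - 2) * ∫ s in Ioc 0 T, ‖φ s k‖ ^ 2 := by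
        rw [Real.rpow_sub hk, Real.rpow_two]
        ring

theorem Gam_eq_exp_smul (φ : ℝ → Z2 → ℂ) (t : ℝ) (k : Z2) :
    Gam φ t k = Real.exp (-t * knorm k ^ 2) •
      ∫ s in Ioc 0 t, Real.exp (s * knorm k ^ 2) • φ s k := by
  rw [Gam, ← integral_smul]
  refine integral_congr_ae (ae_of_all _ fun s => ?_)
  simp only [smul_smul, ← Real.exp_add]
  ring_nf

theorem norm_Gam_le {t : ℝ} (ht : 0 ≤ t) (φ : ℝ → Z2 → ℂ) (k : Z2) :
    ‖Gam φ t k‖ ≤ ‖∫ s in Ioc 0 t, Real.exp (s * knorm k ^ 2) • φ s k‖ := by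
  rw [Gam_eq_exp_smul, norm_smul, Real.norm_eq_abs, Real.abs_exp]
  refine mul_le_of_le_one_left (norm_nonneg _) (Real.exp_le_one_iff.2 ?_)
  nlinarith [sq_nonneg (knorm k)]

theorem WeaklyNull.tendstoUniformlyOn_Gam (hweak : WeaklyNull T ψ) (hψ : ∀ n, MemL2H T (ψ n))
    (k : Z2) : TendstoUniformlyOn (fun n t => Gam (ψ n) t k) (fun _ => 0) atTop (Icc 0 T) := by
  obtain ⟨M, hM⟩ := hweak.exists_L2Hnorm_le hψ
  set g : ℝ → ℝ := fun s => Real.exp (s * knorm k ^ 2)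
  have hg_cont : Continuous g := by fun_prop
  have hle : ∀ n, ∀ᵐ s ∂volume.restrict (Ioc 0 T), ‖g s • ψ n s k‖ ≤ g T * ‖ψ n s k‖ := fun n => by
    filter_upwards [ae_restrict_mem measurableSet_Ioc] with s hs
    rw [norm_smul, Real.norm_of_nonneg (Real.exp_pos _).le]
    exact mul_le_mul_of_nonneg_right
      (Real.exp_le_exp.2 (mul_le_mul_of_nonneg_right hs.2 (sq_nonneg _))) (norm_nonneg _)
  have hmem : ∀ n, MemLp (fun s => g s • ψ n s k) 2 (volume.restrict (Ioc 0 T)) := fun n =>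
    ((hψ n).memLp_mode k).of_le_mul
      (hg_cont.measurable.smul ((hψ n).1 k)).aestronglyMeasurable (hle n)
  have hbound : ∀ n, ∫ s in Ioc 0 T, ‖g s • ψ n s k‖ ^ 2 ≤ g T ^ 2 * M ^ 2 := fun n => calc
    ∫ s in Ioc 0 T, ‖g s • ψ n s k‖ ^ 2 ≤ g T ^ 2 * ∫ s in Ioc 0 T, ‖ψ n s k‖ ^ 2 :=
        integral_norm_sq_le_of_ae_norm_le_mul ((hψ n).memLp_mode k) (hle n)
    _ ≤ g T ^ 2 * L2Hnorm T (ψ n) ^ 2 := by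
        gcongr
        exact le_hasSum (hψ n).hasSum_integral_mode k fun _ _ =>
          integral_nonneg fun _ => by positivity
    _ ≤ g T ^ 2 * M ^ 2 := by
        gcongr
        exacts [Real.sqrt_nonneg _, hM n]
  have hunif := tendstoUniformlyOn_setIntegral_Ioc hmem hbound fun t ht =>
    hweak.tendsto_setIntegral_Ioc k ht.2 hg_cont.measurable
      (memLp_two_restrict_Ioc_of_continuous hg_cont 0 t)
  rw [← tendsto_prod_principal_iff] at hunif ⊢
  refine squeeze_zero_norm' ?_ (tendsto_zero_iff_norm_tendsto_zero.1 hunif)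
  exact eventually_prod_principal_iff.2 <| Eventually.of_forall fun n t ht =>
    norm_Gam_le ht.1 (ψ n) k

theorem WeaklyNull.tendstoUniformlyOn_tsum_rpow_mul_norm_sq_Gam (hweak : WeaklyNull T ψ)
    (hψ : ∀ n, MemL2H T (ψ n)) {ρ : ℝ} (hρ : ρ < 1) :
    TendstoUniformlyOn (fun n t => ∑' k, knorm k ^ (2 * ρ) * ‖Gam (ψ n) t k‖ ^ 2) (fun _ => 0)
      atTop (Icc 0 T) := by
  obtain ⟨M, hM⟩ := hweak.exists_L2Hnorm_le hψ
  have hsum := fun n => (hψ n).hasSum_integral_mode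
  have hmode : ∀ k, TendstoUniformlyOn (fun n t => knorm k ^ (2 * ρ) * ‖Gam (ψ n) t k‖ ^ 2)
      (fun _ => 0) atTop (Icc 0 T) := fun k => by
    have hGam := tendsto_prod_principal_iff.2 (hweak.tendstoUniformlyOn_Gam hψ k)
    rw [← tendsto_prod_principal_iff]
    exact ((hGam.norm.pow 2).const_mul _).trans_eq (by simp)
  refine tendstoUniformlyOn_tsum_of_le_mul (M := M ^ 2)
    (tendsto_knorm_rpow_cofinite (r := 2 * ρ - 2) (by linarith)) (fun n => (hsum n).summable)
    (fun n k => integral_nonneg fun _ => by positivity) (fun n => ?_)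
    (fun n t _ k => mul_nonneg (Real.rpow_nonneg (knorm_pos k).le _) (sq_nonneg _))
    (fun n t ht k => (hψ n).rpow_mul_norm_sq_Gam_le ρ k ht) hmode
  rw [(hsum n).tsum_eq]
  exact pow_le_pow_left₀ (Real.sqrt_nonneg _) (hM n) 2

end Duhamel

/-- if `ψ_n ⇀ 0` weakly in `L²(0,T;H)`, then `Γ(ψ_n) → 0` uniformly on `[0,T]`
in `H^ρ`, for every `ρ < 1`. -/
theorem stmt4 (T : ℝ) (hT : 0 < T) (ψ : ℕ → ℝ → Z2 → ℂ)
    (hψ : ∀ n, MemL2H T (ψ n))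
    (hweak : ∀ χ : ℝ → Z2 → ℂ, MemL2H T χ →
      Tendsto (fun n => innerL2 T χ (ψ n)) atTop (𝓝 0)) :
    ∀ ρ < (1 : ℝ), ∀ η > (0 : ℝ), ∃ N : ℕ, ∀ n ≥ N, ∀ t ∈ Icc (0 : ℝ) T,
      hsNorm ρ (Gam (ψ n) t) < η := by
  intro ρ hρ η hη
  have hnull : WeaklyNull T ψ := hweak
  have hunif := tendsto_prod_principal_iff.2 <|
    hnull.tendstoUniformlyOn_tsum_rpow_mul_norm_sq_Gam hψ hρ
  obtain ⟨N, hN⟩ := eventually_atTop.1 <| eventually_prod_principal_iff.1 <|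
    hunif.eventually (gt_mem_nhds (pow_pos hη 2))
  exact ⟨N, fun n hn t ht => (Real.sqrt_lt' hη).2 (hN n hn t ht)⟩
end

section
/- Let γ>0 and β>0 satisfy 2β<γ. Then there exists a constant C>0 such that for all δ∈(0,1]: Σ_{k∈ℤ²₀} |k|^{4β−2}(1+δ|k|^{2γ})^{−1} ≤ C δ^{−2β/γ}. In particular, with β_η:=ηγ/2 for η∈(0,1/γ)∩(0,∞), the quantity Λ_{β_η}(δ):=Σ_{k∈ℤ²₀}|k|^{−2(1−2β_η)}(1+δ|k|^{2γ})^{−1} satisfies Λ_{β_η}(δ) ≤ C δ^{−η}. -/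
open MeasureTheory Filter Topology Set

/-!
Apart from `|k| ≥ 1`, only two facts about the lattice enter: at most `9 r²` points of `ℤ²₀` have
length at most `r`, and at least a constant times `r²` do when `r` is large. With
`R = δ ^ (-1 / (2γ))`, dividing lengths by `R` turns the sum into `R ^ (4β - 2)` times a sum with
`δ = 1`, and the upper count into `9 R² r²`; the product of powers is `R ^ (4β) = δ ^ (-2β/γ)`.
For `δ = 1`, up to a constant, the dyadic shell `[2ʲ, 2ʲ⁺¹)`, `j ∈ ℤ`, contributes at most
`2 ^ (4βj) / (1 + 2 ^ (2γj))`, which is summable over `ℤ` because `0 < 2β < γ`. Conversely,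
when `2β ≥ γ` the terms dominate a multiple of `|k|⁻²`, which the lower count shows to diverge; this
is the case `η ≥ 1` of the second claim.
-/

section DyadicSums

variable {s a b x y : ℝ}

theorem rpow_le_two_rpow_abs_mul_rpow (hy : 0 < y) (hyx : y ≤ x) (hxy : x ≤ 2 * y) :
    x ^ s ≤ 2 ^ |s| * y ^ s := by
  rcases le_total 0 s with hs | hs
  · calc x ^ s ≤ (2 * y) ^ s := by gcongr; exact hy.le.trans hyx
      _ = 2 ^ |s| * y ^ s := by rw [Real.mul_rpow zero_le_two hy.le, abs_of_nonneg hs]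
  · calc x ^ s ≤ y ^ s := Real.rpow_le_rpow_of_nonpos hy hyx hs
      _ ≤ 2 ^ |s| * y ^ s :=
        le_mul_of_one_le_left (by positivity) (Real.one_le_rpow one_le_two (abs_nonneg s))

theorem rpow_mul_inv_le_dyadic (hb : 0 ≤ b) (hx : 0 < x) :
    x ^ s * (1 + x ^ b)⁻¹ ≤
      2 ^ |s| * (((2 : ℝ) ^ Int.log 2 x) ^ s * (1 + ((2 : ℝ) ^ Int.log 2 x) ^ b)⁻¹) := by
  have hlow : (2 : ℝ) ^ Int.log 2 x ≤ x := Int.zpow_log_le_self one_lt_two hx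
  have hupp : x ≤ 2 * (2 : ℝ) ^ Int.log 2 x := by
    rw [← zpow_one_add₀ two_ne_zero, add_comm]
    exact (Int.lt_zpow_succ_log_self one_lt_two x).le
  rw [← mul_assoc]
  gcongr
  exact rpow_le_two_rpow_abs_mul_rpow (by positivity) hlow hupp

-- The terms decay geometrically, like `2 ^ (-(b - a) * j)` as `j → ∞` and like `2 ^ (a * j)` as
-- `j → -∞`.
theorem summable_zpow_rpow_mul_inv (ha : 0 < a) (hab : a < b) :
    Summable fun j : ℤ => ((2 : ℝ) ^ j) ^ a * (1 + ((2 : ℝ) ^ j) ^ b)⁻¹ := by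
  refine Summable.of_nat_of_neg ?_ ?_
  · have hratio : (2 : ℝ) ^ (a - b) < 1 :=
      Real.rpow_lt_one_of_one_lt_of_neg one_lt_two (sub_neg.mpr hab)
    refine Summable.of_nonneg_of_le (fun n => by positivity) (fun n => ?_)
      (summable_geometric_of_lt_one (by positivity) hratio)
    calc ((2 : ℝ) ^ (n : ℤ)) ^ a * (1 + ((2 : ℝ) ^ (n : ℤ)) ^ b)⁻¹
        ≤ ((2 : ℝ) ^ (n : ℤ)) ^ a * (((2 : ℝ) ^ (n : ℤ)) ^ b)⁻¹ := by
          gcongr; exact le_add_of_nonneg_left zero_le_one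
      _ = ((2 : ℝ) ^ (a - b)) ^ n := by
          rw [← div_eq_mul_inv, ← Real.rpow_sub (by positivity), zpow_natCast,
            Real.rpow_pow_comm zero_le_two]
  · have hratio : (2 : ℝ) ^ (-a) < 1 :=
      Real.rpow_lt_one_of_one_lt_of_neg one_lt_two (neg_neg_of_pos ha)
    refine Summable.of_nonneg_of_le (fun n => by positivity) (fun n => ?_)
      (summable_geometric_of_lt_one (by positivity) hratio)
    calc ((2 : ℝ) ^ (-n : ℤ)) ^ a * (1 + ((2 : ℝ) ^ (-n : ℤ)) ^ b)⁻¹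
        ≤ ((2 : ℝ) ^ (-n : ℤ)) ^ a :=
          mul_le_of_le_one_right (by positivity)
            (inv_le_one_of_one_le₀ (le_add_of_nonneg_right (by positivity)))
      _ = ((2 : ℝ) ^ (-a)) ^ n := by
          rw [zpow_neg, zpow_natCast, Real.inv_rpow (by positivity), Real.rpow_neg zero_le_two,
            inv_pow, Real.rpow_pow_comm zero_le_two]

end DyadicSums

/-- The constant `2 ^ (d + |s|) ∑ⱼ 2 ^ (j (s + d)) / (1 + 2 ^ (j b))` with which the dyadic
decomposition bounds `∑ᵢ (f i) ^ s / (1 + (f i) ^ b)` when `f` has at most `r ^ d` values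
below `r`. -/
noncomputable def dyadicConst (s d b : ℝ) : ℝ :=
  2 ^ d * 2 ^ |s| * ∑' j : ℤ, ((2 : ℝ) ^ j) ^ (s + d) * (1 + ((2 : ℝ) ^ j) ^ b)⁻¹

theorem dyadicConst_pos {s d b : ℝ} (ha : 0 < s + d) (hab : s + d < b) : 0 < dyadicConst s d b :=
  mul_pos (by positivity) <|
    (summable_zpow_rpow_mul_inv ha hab).tsum_pos (fun j => by positivity) 0 (by positivity)

/-- The upper counting bound `#{i | f i ≤ r} ≤ A r ^ d` for all `r > 0`. It is expressed through
finite subsets of the sublevel sets, so that it includes their finiteness. -/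
def CardSublevelLE {ι : Type*} (f : ι → ℝ) (A d : ℝ) : Prop :=
  ∀ r : ℝ, 0 < r → ∀ S : Finset ι, (∀ i ∈ S, f i ≤ r) → (S.card : ℝ) ≤ A * r ^ d

section Counting

variable {ι : Type*} {f : ι → ℝ} {A d s b : ℝ}

theorem CardSublevelLE.div_const {R : ℝ} (hcard : CardSublevelLE f A d) (hR : 0 < R) :
    CardSublevelLE (fun i => f i / R) (A * R ^ d) d := by
  intro r hr S hS
  calc (S.card : ℝ) ≤ A * (r * R) ^ d :=
        hcard (r * R) (by positivity) S fun i hi => (div_le_iff₀ hR).mp (hS i hi)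
    _ = A * R ^ d * r ^ d := by rw [Real.mul_rpow hr.le hR.le]; ring

theorem CardSublevelLE.sum_dyadic_shell_le (hcard : CardSublevelLE f A d) (hf : ∀ i, 0 < f i)
    (hb : 0 ≤ b) (j : ℤ) (S : Finset ι) (hS : ∀ i ∈ S, Int.log 2 (f i) = j) :
    ∑ i ∈ S, f i ^ s * (1 + f i ^ b)⁻¹ ≤
      A * (2 ^ d * 2 ^ |s|) * (((2 : ℝ) ^ j) ^ (s + d) * (1 + ((2 : ℝ) ^ j) ^ b)⁻¹) := by
  have hcardS : (S.card : ℝ) ≤ A * ((2 : ℝ) ^ (j + 1)) ^ d :=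
    hcard _ (by positivity) S fun i hi =>
      hS i hi ▸ (Int.lt_zpow_succ_log_self one_lt_two (f i)).le
  calc ∑ i ∈ S, f i ^ s * (1 + f i ^ b)⁻¹
      ≤ S.card • (2 ^ |s| * (((2 : ℝ) ^ j) ^ s * (1 + ((2 : ℝ) ^ j) ^ b)⁻¹)) :=
        Finset.sum_le_card_nsmul _ _ _ fun i hi => hS i hi ▸ rpow_mul_inv_le_dyadic hb (hf i)
    _ ≤ A * ((2 : ℝ) ^ (j + 1)) ^ d *
          (2 ^ |s| * (((2 : ℝ) ^ j) ^ s * (1 + ((2 : ℝ) ^ j) ^ b)⁻¹)) := by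
        rw [nsmul_eq_mul]
        gcongr
    _ = A * (2 ^ d * 2 ^ |s|) * (((2 : ℝ) ^ j) ^ (s + d) * (1 + ((2 : ℝ) ^ j) ^ b)⁻¹) := by
        rw [zpow_add_one₀ two_ne_zero, Real.mul_rpow (by positivity) zero_le_two,
          Real.rpow_add (by positivity)]
        ring

theorem CardSublevelLE.sum_le (hcard : CardSublevelLE f A d) (hA : 0 ≤ A) (hf : ∀ i, 0 < f i)
    (ha : 0 < s + d) (hab : s + d < b) (S : Finset ι) :
    ∑ i ∈ S, f i ^ s * (1 + f i ^ b)⁻¹ ≤ A * dyadicConst s d b := by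
  classical
  let shell (i : ι) : ℤ := Int.log 2 (f i)
  calc ∑ i ∈ S, f i ^ s * (1 + f i ^ b)⁻¹
      = ∑ j ∈ S.image shell, ∑ i ∈ S with shell i = j, f i ^ s * (1 + f i ^ b)⁻¹ :=
        (Finset.sum_fiberwise_of_maps_to (fun _ => Finset.mem_image_of_mem shell) _).symm
    _ ≤ ∑ j ∈ S.image shell,
          A * (2 ^ d * 2 ^ |s|) * (((2 : ℝ) ^ j) ^ (s + d) * (1 + ((2 : ℝ) ^ j) ^ b)⁻¹) :=
        Finset.sum_le_sum fun j _ => hcard.sum_dyadic_shell_le hf (ha.trans hab).le j _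
          fun _ hi => (Finset.mem_filter.mp hi).2
    _ ≤ A * (2 ^ d * 2 ^ |s|) *
          ∑' j : ℤ, ((2 : ℝ) ^ j) ^ (s + d) * (1 + ((2 : ℝ) ^ j) ^ b)⁻¹ := by
        rw [← Finset.mul_sum]
        gcongr
        exact (summable_zpow_rpow_mul_inv ha hab).sum_le_tsum _ fun j _ => by positivity
    _ = A * dyadicConst s d b := by rw [dyadicConst, mul_assoc]

-- With `R = δ ^ (-1 / b)` one has `δ * f ^ b = (f / R) ^ b`, which reduces to the case `δ = 1`.
theorem CardSublevelLE.sum_le_rpow (hcard : CardSublevelLE f A d) (hA : 0 ≤ A)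
    (hf : ∀ i, 0 < f i) (ha : 0 < s + d) (hab : s + d < b) {δ : ℝ} (hδ : 0 < δ) (S : Finset ι) :
    ∑ i ∈ S, f i ^ s * (1 + δ * f i ^ b)⁻¹ ≤ A * dyadicConst s d b * δ ^ (-(s + d) / b) := by
  have hb : b ≠ 0 := (ha.trans hab).ne'
  set R : ℝ := δ ^ (-1 / b) with hRdef
  have hR : 0 < R := by positivity
  have hRb : R ^ b = δ⁻¹ := by
    rw [hRdef, ← Real.rpow_mul hδ.le, div_mul_cancel₀ _ hb, Real.rpow_neg_one]
  have hRa : R ^ (s + d) = δ ^ (-(s + d) / b) := by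
    rw [hRdef, ← Real.rpow_mul hδ.le]; ring_nf
  have hterm (i : ι) :
      f i ^ s * (1 + δ * f i ^ b)⁻¹ = R ^ s * ((f i / R) ^ s * (1 + (f i / R) ^ b)⁻¹) := by
    rw [Real.div_rpow (hf i).le hR.le, Real.div_rpow (hf i).le hR.le, hRb]
    field_simp
  calc ∑ i ∈ S, f i ^ s * (1 + δ * f i ^ b)⁻¹
      = R ^ s * ∑ i ∈ S, (f i / R) ^ s * (1 + (f i / R) ^ b)⁻¹ := by
        simp_rw [hterm, Finset.mul_sum]
    _ ≤ R ^ s * (A * R ^ d * dyadicConst s d b) := by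
        gcongr
        exact (hcard.div_const hR).sum_le (by positivity) (fun i => div_pos (hf i) hR) ha hab S
    _ = A * dyadicConst s d b * δ ^ (-(s + d) / b) := by
        rw [← hRa, Real.rpow_add hR]; ring

-- Once `r` is large, the at least `c * r ^ d` indices with `f i ≤ r` still contribute `c / 2` after
-- a fixed finite set is removed, which contradicts the Cauchy criterion.
theorem not_summable_rpow_neg_of_le_card {c : ℝ} (hf : ∀ i, 0 < f i) (hd : 0 < d) (hc : 0 < c)
    (hcard : ∃ᶠ r in atTop, ∃ S : Finset ι, (∀ i ∈ S, f i ≤ r) ∧ c * r ^ d ≤ S.card) :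
    ¬ Summable fun i => f i ^ (-d) := by
  classical
  intro hsum
  obtain ⟨T, hT⟩ := summable_iff_vanishing_norm.mp hsum (c / 2) (half_pos hc)
  have hlarge : ∀ᶠ r : ℝ in atTop, (T.card : ℝ) ≤ c / 2 * r ^ d :=
    ((tendsto_rpow_atTop hd).const_mul_atTop (half_pos hc)).eventually_ge_atTop _
  obtain ⟨r, ⟨S, hSr, hS⟩, hTr, hr⟩ :=
    (hcard.and_eventually (hlarge.and (eventually_gt_atTop 0))).exists
  have hsdiff : c / 2 * r ^ d ≤ (S \ T).card := by
    have : (S.card : ℝ) ≤ (S \ T).card + T.card := by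
      exact_mod_cast tsub_le_iff_right.mp (Finset.le_card_sdiff T S)
    linarith
  have htail : c / 2 ≤ ∑ i ∈ S \ T, f i ^ (-d) :=
    calc c / 2 = c / 2 * r ^ d * r ^ (-d) := by
          rw [mul_assoc, ← Real.rpow_add hr, add_neg_cancel, Real.rpow_zero, mul_one]
      _ ≤ (S \ T).card • r ^ (-d) := by
          rw [nsmul_eq_mul]
          gcongr
      _ ≤ ∑ i ∈ S \ T, f i ^ (-d) := Finset.card_nsmul_le_sum _ _ _ fun i hi =>
          Real.rpow_le_rpow_of_nonpos (hf i) (hSr i (Finset.mem_sdiff.mp hi).1)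
            (neg_nonpos.mpr hd.le)
  exact absurd (hT _ Finset.sdiff_disjoint) (not_lt.mpr (htail.trans (le_abs_self _)))

theorem summable_rpow_neg_of_summable_mul_inv (hf : ∀ i, 1 ≤ f i) (hb : 0 ≤ b)
    (hbsd : b ≤ s + d) {δ : ℝ} (hδ : 0 < δ)
    (hsum : Summable fun i => f i ^ s * (1 + δ * f i ^ b)⁻¹) :
    Summable fun i => f i ^ (-d) := by
  have hpos (i : ι) : 0 < f i := zero_lt_one.trans_le (hf i)
  refine Summable.of_nonneg_of_le (fun i => Real.rpow_nonneg (hpos i).le _) (fun i => ?_)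
    (hsum.mul_left (1 + δ))
  have hfi := hpos i
  calc f i ^ (-d) ≤ f i ^ (s - b) := Real.rpow_le_rpow_of_exponent_le (hf i) (by linarith)
    _ = (1 + δ) * (f i ^ s * ((1 + δ) * f i ^ b)⁻¹) := by
        rw [Real.rpow_sub hfi]; field_simp
    _ ≤ (1 + δ) * (f i ^ s * (1 + δ * f i ^ b)⁻¹) := by
        gcongr
        linarith [Real.one_le_rpow (hf i) hb]

end Counting

section Lattice

theorem abs_fst_le_knorm (k : Z2) : |(k.val.1 : ℝ)| ≤ knorm k :=
  Real.abs_le_sqrt (le_add_of_nonneg_right (sq_nonneg _))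

theorem abs_snd_le_knorm (k : Z2) : |(k.val.2 : ℝ)| ≤ knorm k :=
  Real.abs_le_sqrt (le_add_of_nonneg_left (sq_nonneg _))

theorem one_le_knorm (k : Z2) : 1 ≤ knorm k := by
  have one_le_abs {m : ℤ} (hm : m ≠ 0) : (1 : ℝ) ≤ |(m : ℝ)| := by
    exact_mod_cast Int.one_le_abs hm
  by_cases h : k.val.1 = 0
  · exact (one_le_abs fun h' => k.property (Prod.ext h h')).trans (abs_snd_le_knorm k)
  · exact (one_le_abs h).trans (abs_fst_le_knorm k)

theorem cardSublevelLE_knorm : CardSublevelLE knorm 9 2 := by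
  intro r hr S hS
  rcases S.eq_empty_or_nonempty with rfl | ⟨k₀, hk₀⟩
  · simpa using sq_nonneg r
  have hr1 : 1 ≤ r := (one_le_knorm k₀).trans (hS k₀ hk₀)
  let I : Finset ℤ := Finset.Icc (-⌊r⌋) ⌊r⌋
  have mem_I {m : ℤ} (hm : |(m : ℝ)| ≤ r) : m ∈ I := by
    rw [Finset.mem_Icc, ← abs_le, Int.le_floor]
    exact_mod_cast hm
  have hsub : S.map (Function.Embedding.subtype _) ⊆ I ×ˢ I := by
    intro p hp
    obtain ⟨k, hk, rfl⟩ := Finset.mem_map.mp hp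
    exact Finset.mem_product.mpr ⟨mem_I ((abs_fst_le_knorm k).trans (hS k hk)),
      mem_I ((abs_snd_le_knorm k).trans (hS k hk))⟩
  have hI : (I.card : ℝ) ≤ 3 * r := by
    have hfloor : 1 ≤ ⌊r⌋ := Int.le_floor.mpr (by exact_mod_cast hr1)
    have hcardI : (I.card : ℤ) = 2 * ⌊r⌋ + 1 := by
      rw [Int.card_Icc]; omega
    have hcardI' : (I.card : ℝ) = 2 * ⌊r⌋ + 1 := by exact_mod_cast hcardI
    linarith [Int.floor_le r]
  calc (S.card : ℝ) ≤ I.card * I.card := by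
        rw [← Finset.card_map (Function.Embedding.subtype _)]
        exact_mod_cast (Finset.card_le_card hsub).trans_eq (Finset.card_product I I)
    _ ≤ (3 * r) * (3 * r) := by gcongr
    _ = 9 * r ^ (2 : ℝ) := by rw [Real.rpow_two]; ring

theorem exists_finset_knorm_le_sq_le_card (n : ℕ) :
    ∃ S : Finset Z2, (∀ k ∈ S, knorm k ≤ 2 * n) ∧ (n : ℝ) ^ 2 ≤ S.card := by
  let Q : Finset (ℤ × ℤ) := Finset.Icc 1 (n : ℤ) ×ˢ Finset.Icc 1 (n : ℤ)
  have hQ {p : ℤ × ℤ} (hp : p ∈ Q) : (1 ≤ p.1 ∧ p.1 ≤ n) ∧ 1 ≤ p.2 ∧ p.2 ≤ n := by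
    simpa only [Q, Finset.mem_product, Finset.mem_Icc] using hp
  refine ⟨Q.subtype (· ≠ 0), fun k hk => ?_, ?_⟩
  · obtain ⟨⟨hx1, hxn⟩, hy1, hyn⟩ := hQ (Finset.mem_subtype.mp hk)
    refine Real.sqrt_le_iff.mpr ⟨by positivity, ?_⟩
    have : k.val.1 ^ 2 + k.val.2 ^ 2 ≤ (2 * (n : ℤ)) ^ 2 := by nlinarith
    exact_mod_cast this
  · have hne : ∀ p ∈ Q, p ≠ 0 := by
      rintro p hp rfl
      exact absurd (hQ hp).1.1 (by decide)
    rw [Finset.card_subtype, Finset.filter_true_of_mem hne, Finset.card_product, Int.card_Icc,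
      add_sub_cancel_right, Int.toNat_natCast, sq]
    exact_mod_cast le_rfl

theorem not_summable_knorm_rpow_neg_two : ¬ Summable fun k : Z2 => knorm k ^ (-2 : ℝ) := by
  refine not_summable_rpow_neg_of_le_card knorm_pos two_pos (c := 1 / 4) (by norm_num) ?_
  refine (tendsto_natCast_atTop_atTop.const_mul_atTop (two_pos (α := ℝ))).frequently
    (Frequently.of_forall fun n => ?_)
  obtain ⟨S, hS, hcard⟩ := exists_finset_knorm_le_sq_le_card n
  refine ⟨S, hS, hcard.trans' (le_of_eq ?_)⟩
  rw [Real.rpow_two]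
  ring

theorem summable_knorm_rpow_mul_inv_iff {p b δ : ℝ} (hp : 0 < p + 2) (hb : 0 ≤ b) (hδ : 0 < δ) :
    (Summable fun k : Z2 => knorm k ^ p * (1 + δ * knorm k ^ b)⁻¹) ↔ p + 2 < b := by
  refine ⟨fun hsum => ?_, fun hpb => ?_⟩
  · by_contra! hbp
    exact not_summable_knorm_rpow_neg_two
      (summable_rpow_neg_of_summable_mul_inv one_le_knorm hb hbp hδ hsum)
  · exact summable_of_sum_le (fun k => by have := knorm_pos k; positivity)
      (cardSublevelLE_knorm.sum_le_rpow (by norm_num) knorm_pos hp hpb hδ)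

theorem exists_tsum_knorm_rpow_mul_inv_le {p b : ℝ} (hp : 0 < p + 2) (hb : 0 ≤ b) :
    ∃ C : ℝ, 0 < C ∧ ∀ δ : ℝ, 0 < δ →
      ∑' k : Z2, knorm k ^ p * (1 + δ * knorm k ^ b)⁻¹ ≤ C * δ ^ (-(p + 2) / b) := by
  rcases lt_or_ge (p + 2) b with hpb | hbp
  · exact ⟨9 * dyadicConst p 2 b, mul_pos (by norm_num) (dyadicConst_pos hp hpb), fun δ hδ =>
      Real.tsum_le_of_sum_le (fun k => by have := knorm_pos k; positivity)
        (cardSublevelLE_knorm.sum_le_rpow (by norm_num) knorm_pos hp hpb hδ)⟩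
  · -- The series diverges here, so `∑'` takes its junk value `0`.
    refine ⟨1, one_pos, fun δ hδ => ?_⟩
    rw [tsum_eq_zero_of_not_summable
      (mt (summable_knorm_rpow_mul_inv_iff hp hb hδ).mp hbp.not_gt)]
    positivity

end Lattice

theorem stmt8_general (γ β : ℝ) (hβ : 0 < β) (h2β : 2 * β < γ) :
    (∃ C : ℝ, 0 < C ∧ ∀ δ : ℝ, 0 < δ →
      (Summable fun k : Z2 => knorm k ^ (4 * β - 2) * (1 + δ * knorm k ^ (2 * γ))⁻¹) ∧
      ∑' k : Z2, knorm k ^ (4 * β - 2) * (1 + δ * knorm k ^ (2 * γ))⁻¹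
        ≤ C * δ ^ (-(2 * β) / γ)) ∧
    (∀ η : ℝ, 0 < η →
      ∃ C : ℝ, 0 < C ∧ ∀ δ : ℝ, 0 < δ →
        ((Summable fun k : Z2 =>
          knorm k ^ (-(2 * (1 - 2 * (η * γ / 2)))) * (1 + δ * knorm k ^ (2 * γ))⁻¹) ↔ η < 1) ∧
        ∑' k : Z2, knorm k ^ (-(2 * (1 - 2 * (η * γ / 2)))) * (1 + δ * knorm k ^ (2 * γ))⁻¹
          ≤ C * δ ^ (-η)) := by
  have hγ : 0 < γ := by linarith
  have hb : 0 ≤ 2 * γ := by positivity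
  refine ⟨?_, fun η hη => ?_⟩
  · have hp : 0 < 4 * β - 2 + 2 := by linarith
    have hexp : -(4 * β - 2 + 2) / (2 * γ) = -(2 * β) / γ := by field_simp; ring
    obtain ⟨C, hC, hle⟩ := exists_tsum_knorm_rpow_mul_inv_le hp hb
    exact ⟨C, hC, fun δ hδ =>
      ⟨(summable_knorm_rpow_mul_inv_iff hp hb hδ).mpr (by linarith), hexp ▸ hle δ hδ⟩⟩
  · have hadd : -(2 * (1 - 2 * (η * γ / 2))) + 2 = η * (2 * γ) := by ring
    have hp : 0 < -(2 * (1 - 2 * (η * γ / 2))) + 2 := hadd ▸ by positivity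
    have hexp : -(-(2 * (1 - 2 * (η * γ / 2))) + 2) / (2 * γ) = -η := by
      rw [hadd]; field_simp
    obtain ⟨C, hC, hle⟩ := exists_tsum_knorm_rpow_mul_inv_le hp hb
    refine ⟨C, hC, fun δ hδ => ⟨?_, hexp ▸ hle δ hδ⟩⟩
    rw [summable_knorm_rpow_mul_inv_iff hp hb hδ, hadd, mul_lt_iff_lt_one_left (by positivity)]

/-- if `2β < γ` then `Σ_k |k|^{4β-2}(1+δ|k|^{2γ})^{-1} ≤ C δ^{-2β/γ}` for
`δ ∈ (0,1]`; in particular, with `β_η = ηγ/2` for `η ∈ (0,1/γ)`, the quantity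
`Λ_{β_η}(δ) = Σ_k |k|^{-2(1-2β_η)}(1+δ|k|^{2γ})^{-1}` satisfies `Λ_{β_η}(δ) ≤ C δ^{-η}`. -/
theorem stmt8 (γ β : ℝ) (hγ : 0 < γ) (hβ : 0 < β) (h2β : 2 * β < γ) :
    (∃ C : ℝ, 0 < C ∧ ∀ δ ∈ Ioc (0 : ℝ) 1,
      (Summable fun k : Z2 => knorm k ^ (4 * β - 2) * (1 + δ * knorm k ^ (2 * γ))⁻¹) ∧
      ∑' k : Z2, knorm k ^ (4 * β - 2) * (1 + δ * knorm k ^ (2 * γ))⁻¹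
        ≤ C * δ ^ (-(2 * β) / γ)) ∧
    (∀ η : ℝ, 0 < η → η < 1 / γ →
      ∃ C : ℝ, 0 < C ∧ ∀ δ ∈ Ioc (0 : ℝ) 1,
        ∑' k : Z2, knorm k ^ (-(2 * (1 - 2 * (η * γ / 2)))) * (1 + δ * knorm k ^ (2 * γ))⁻¹
          ≤ C * δ ^ (-η)) :=
  (stmt8_general γ β hβ h2β).imp (fun ⟨C, hC, h⟩ => ⟨C, hC, fun δ hδ => h δ hδ.1⟩)
    fun h η hη _ => (h η hη).imp fun _ hC => ⟨hC.1, fun δ hδ => (hC.2 δ hδ.1).2⟩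
end
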